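/- Let n ≥ 2 be an integer and set δ = 1 if n is odd and δ = 0 if n is even. Let g denote the standard generator of the cyclic group ℤ/nℤ and consider the element u = 4 − 2g^{1+δ} − 2g^{−(1+δ)} + Σ_{i=0}^{n−1} gⁱ of the group algebra ℚ[ℤ/nℤ]. Then the ℚ-linear endomorphism of ℚ[ℤ/nℤ] given by multiplication by u has determinant 2^{n−1}·n³. -/

import Mathlib

open ZMod in
noncomputable def dihChi (n : ℕ) [NeZero n] (k : ZMod n) :
    MonoidAlgebra ℚ (Multiplicative (ZMod n)) →ₐ[ℚ] ℂ :=
  MonoidAlgebra.lift ℚ ℂ (Multiplicative (ZMod n))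
    (AddChar.toMonoidHom (AddChar.mulShift (ZMod.stdAddChar (N := n)) k))

lemma dihChi_of (n : ℕ) [NeZero n] (k : ZMod n) (x : Multiplicative (ZMod n)) :
    dihChi n k (MonoidAlgebra.of ℚ _ x) = ZMod.stdAddChar (k * x.toAdd) := by
  rw [dihChi, MonoidAlgebra.lift_of]
  rfl

lemma dih_det (n : ℕ) [NeZero n] (u : MonoidAlgebra ℚ (Multiplicative (ZMod n))) :
    ((LinearMap.det (LinearMap.mulLeft ℚ u) : ℚ) : ℂ) = ∏ k : ZMod n, dihChi n k u := by
  classical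
  let b := MonoidAlgebra.basis (Multiplicative (ZMod n)) ℚ
  have hb : ∀ x, b x = MonoidAlgebra.of ℚ _ x := fun x => by simp [b]
  let M := LinearMap.toMatrix b b (LinearMap.mulLeft ℚ u)
  let V : Matrix (Multiplicative (ZMod n)) (Multiplicative (ZMod n)) ℂ :=
    Matrix.of fun k j => dihChi n k.toAdd (b j)
  have h1 : V * M.map (algebraMap ℚ ℂ) =
      Matrix.diagonal (fun k : Multiplicative (ZMod n) => dihChi n k.toAdd u) * V := by
    ext k j
    rw [Matrix.diagonal_mul, Matrix.mul_apply]
    have h := b.sum_repr (u * b j)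
    have h2 := congrArg (dihChi n k.toAdd) h
    rw [map_sum, map_mul (dihChi n k.toAdd)] at h2
    simp only [V, Matrix.of_apply]
    rw [← h2]
    refine Finset.sum_congr rfl fun i _ => ?_
    rw [map_smul, Matrix.map_apply, Algebra.smul_def, mul_comm]
    simp only [M, LinearMap.toMatrix_apply, LinearMap.mulLeft_apply]
  have hV : V.det ≠ 0 := by
    rw [← isUnit_iff_ne_zero, ← Matrix.isUnit_iff_isUnit_det,
      ← Matrix.linearIndependent_rows_iff_isUnit]
    have h := (linearIndependent_monoidHom (Multiplicative (ZMod n)) ℂ).comp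
      (fun k : Multiplicative (ZMod n) =>
        AddChar.toMonoidHom (AddChar.mulShift (ZMod.stdAddChar (N := n)) k.toAdd)) (by
          intro a c hac
          apply AddChar.to_mulShift_inj_of_isPrimitive (ZMod.isPrimitive_stdAddChar n)
          ext x
          exact DFunLike.congr_fun hac (Multiplicative.ofAdd x))
    have hr : V.row = (fun f : Multiplicative (ZMod n) →* ℂ => (f : Multiplicative (ZMod n) → ℂ)) ∘
        (fun k : Multiplicative (ZMod n) =>
          AddChar.toMonoidHom (AddChar.mulShift (ZMod.stdAddChar (N := n)) k.toAdd)) := by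
      funext k j
      simp only [V, Matrix.row, Matrix.of_apply, hb, dihChi_of]
      rfl
    rw [hr]
    exact h
  have h3 := congrArg Matrix.det h1
  rw [Matrix.det_mul, Matrix.det_mul, mul_comm, Matrix.det_diagonal] at h3
  have h4 := mul_right_cancel₀ hV h3
  rw [← LinearMap.det_toMatrix b]
  change algebraMap ℚ ℂ M.det = _
  rw [RingHom.map_det]
  refine Eq.trans h4 ?_
  exact Fintype.prod_equiv Multiplicative.toAdd _ _ (fun _ => rfl)

lemma dih_prod (n : ℕ) [NeZero n] :
    ∏ k ∈ Finset.univ.erase (0 : ZMod n), (1 - ZMod.stdAddChar k : ℂ) = n := by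
  obtain ⟨m, rfl⟩ := Nat.exists_eq_succ_of_ne_zero (NeZero.ne n)
  have hz : IsPrimitiveRoot (ZMod.stdAddChar (1 : ZMod (m + 1)) : ℂ) (m + 1) := by
    have := Complex.isPrimitiveRoot_exp (m + 1) (by omega)
    convert this using 1
    have h := ZMod.stdAddChar_coe (N := m + 1) 1
    simpa using h
  have h := hz.prod_one_sub_pow_eq_order
  push_cast
  rw [← h]
  symm
  refine Finset.prod_bij (fun i _ => ((i + 1 : ℕ) : ZMod (m + 1))) ?_ ?_ ?_ ?_
  · intro i hi
    rw [Finset.mem_range] at hi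
    refine Finset.mem_erase.2 ⟨fun h0 => ?_, Finset.mem_univ _⟩
    rw [ZMod.natCast_eq_zero_iff] at h0
    have := Nat.le_of_dvd (by omega) h0
    omega
  · intro i hi j hj hij
    rw [Finset.mem_range] at hi hj
    rw [ZMod.natCast_eq_natCast_iff', Nat.mod_eq_of_lt (by omega),
      Nat.mod_eq_of_lt (by omega)] at hij
    omega
  · intro x hx
    have hx0 : x.val ≠ 0 := fun h0 => Finset.ne_of_mem_erase hx ((ZMod.val_eq_zero x).1 h0)
    have hlt := ZMod.val_lt x
    refine ⟨x.val - 1, Finset.mem_range.2 (by omega), ?_⟩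
    rw [Nat.sub_add_cancel (by omega)]
    exact ZMod.natCast_zmod_val x
  · intro i _
    rw [← AddChar.map_nsmul_eq_pow, nsmul_one]

lemma dih_prod_mul (n : ℕ) [NeZero n] (a : ZMod n) (ha : IsUnit a) :
    ∏ k ∈ Finset.univ.erase (0 : ZMod n), (1 - ZMod.stdAddChar (k * a) : ℂ) = n := by
  rw [← dih_prod n]
  obtain ⟨v, rfl⟩ := ha
  refine Finset.prod_equiv (Units.mulRight v) (fun i => ?_) (fun i _ => rfl)
  simp


/-- Let `n ≥ 2`, `δ = 1` if `n` is odd and `δ = 0` if `n` is even, and let `g` be the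
standard generator of `ℤ/nℤ`. Multiplication by
`u = 4 − 2g^{1+δ} − 2g^{−(1+δ)} + Σ_{i=0}^{n−1} gⁱ` on the group algebra `ℚ[ℤ/nℤ]`
has determinant `2^{n−1}·n³`. -/
theorem det_mulLeft_dihedral_element (n : ℕ) [NeZero n] (hn : 2 ≤ n) :
    LinearMap.det (LinearMap.mulLeft ℚ
      ((4 : MonoidAlgebra ℚ (Multiplicative (ZMod n)))
        - 2 * MonoidAlgebra.of ℚ (Multiplicative (ZMod n))
            ((Multiplicative.ofAdd (1 : ZMod n)) ^ (1 + if Odd n then 1 else 0))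
        - 2 * MonoidAlgebra.of ℚ (Multiplicative (ZMod n))
            (((Multiplicative.ofAdd (1 : ZMod n)) ^ (1 + if Odd n then 1 else 0))⁻¹)
        + ∑ i ∈ Finset.range n,
            MonoidAlgebra.of ℚ (Multiplicative (ZMod n))
              ((Multiplicative.ofAdd (1 : ZMod n)) ^ i))) =
      2 ^ (n - 1) * (n : ℚ) ^ 3 := by
  set m : ℕ := 1 + if Odd n then 1 else 0 with hm
  have hu : IsUnit (m : ZMod n) := by
    rw [ZMod.isUnit_iff_coprime, hm]
    split_ifs with h
    · simpa using h.coprime_two_left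
    · simp
  apply Rat.cast_injective (α := ℂ)
  rw [dih_det, ← Finset.mul_prod_erase _ _ (Finset.mem_univ (0 : ZMod n))]
  have hs : ∀ k : ZMod n, ∑ i ∈ Finset.range n, (ZMod.stdAddChar (k * (i : ZMod n)) : ℂ) =
      if k = 0 then (n : ℂ) else 0 := by
    intro k
    have h := AddChar.sum_mulShift k (ZMod.isPrimitive_stdAddChar n)
    rw [ZMod.card] at h
    push_cast at h
    rw [← h]
    refine Finset.sum_bij (fun i _ => (i : ZMod n)) (by simp) ?_ ?_ ?_
    · intro a ha b hb hab
      rw [ZMod.natCast_eq_natCast_iff'] at hab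
      rwa [Nat.mod_eq_of_lt (Finset.mem_range.1 ha),
        Nat.mod_eq_of_lt (Finset.mem_range.1 hb)] at hab
    · intro b _
      exact ⟨b.val, Finset.mem_range.2 (ZMod.val_lt b), by simp⟩
    · intro a _
      rw [mul_comm]
  have key : ∀ k : ZMod n, dihChi n k
      ((4 : MonoidAlgebra ℚ (Multiplicative (ZMod n)))
        - 2 * MonoidAlgebra.of ℚ (Multiplicative (ZMod n))
            ((Multiplicative.ofAdd (1 : ZMod n)) ^ m)
        - 2 * MonoidAlgebra.of ℚ (Multiplicative (ZMod n))
            (((Multiplicative.ofAdd (1 : ZMod n)) ^ m)⁻¹)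
        + ∑ i ∈ Finset.range n,
            MonoidAlgebra.of ℚ (Multiplicative (ZMod n))
              ((Multiplicative.ofAdd (1 : ZMod n)) ^ i)) =
      2 * (1 - ZMod.stdAddChar (k * (m : ZMod n))) * (1 - ZMod.stdAddChar (k * (-m : ZMod n)))
        + if k = 0 then (n : ℂ) else 0 := by
    intro k
    rw [← hs k]
    have e : (ZMod.stdAddChar (k * (m : ZMod n)) : ℂ) * ZMod.stdAddChar (k * (-m : ZMod n)) = 1 := by
      rw [← AddChar.map_add_eq_mul]
      simp
    simp only [map_add, map_sub, map_mul, map_sum, dihChi_of, map_ofNat, toAdd_inv, toAdd_pow,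
      toAdd_ofAdd, nsmul_one]
    linear_combination (-2 : ℂ) * e
  rw [key, Finset.prod_congr rfl (g := fun k => 2 * ((1 - ZMod.stdAddChar (k * (m : ZMod n))) *
    (1 - ZMod.stdAddChar (k * (-m : ZMod n)))) ) (fun k hk => by
      rw [key, if_neg (Finset.ne_of_mem_erase hk)]; ring)]
  rw [Finset.prod_mul_distrib, Finset.prod_mul_distrib, dih_prod_mul n _ hu,
    dih_prod_mul n _ hu.neg, Finset.prod_const, Finset.card_erase_of_mem (Finset.mem_univ _),
    Finset.card_univ, ZMod.card]
  simp
  ring
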